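/- arXiv:2111.15226 — 9 statements merged into one kernel-verified Lean document; each statement's English description precedes it below -/
import Mathlib

section
/- Let B be a complete atomic Boolean algebra and let caΣ_B denote the set of completely additive two-valued homomorphisms of B. Then the map α_B : B → Set(caΣ_B) defined by α_B(b) := {λ ∈ caΣ_B | λ(b)} is a bijection from B onto the full power set of caΣ_B. -/
/-- The homomorphism attached to an atom. -/
def atomHom {B : Type*} [CompleteAtomicBooleanAlgebra B] (a : B) (ha : IsAtom a) :
    CompleteLatticeHom B Prop where
  toFun b := a ≤ b
  map_sInf' s := by
    simp [sInf_Prop_eq, le_sInf_iff]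
    exact ⟨fun h p x hx hp => hp.mp (h x hx), fun h b hb => h _ b hb Iff.rfl⟩
  map_sSup' s := by
    simp [sSup_Prop_eq, ha.le_sSup]
    exact ⟨fun ⟨b, hb, h⟩ => ⟨_, ⟨b, hb, Iff.rfl⟩, h⟩, fun ⟨_, ⟨b, hb, h⟩, hp⟩ => ⟨b, hb, h.mpr hp⟩⟩

theorem eq_atomHom {B : Type*} [CompleteAtomicBooleanAlgebra B] (l : CompleteLatticeHom B Prop)
    (a : B) (ha : IsAtom a) (hl : l a) : l = atomHom a ha := by
  apply DFunLike.ext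
  intro b
  apply propext
  change l b ↔ a ≤ b
  constructor
  · intro hb
    by_contra hab
    have h1 : a ⊓ b = ⊥ := (ha.not_le_iff_disjoint.mp hab).eq_bot
    have h2 : l (a ⊓ b) := by
      rw [map_inf]
      exact ⟨hl, hb⟩
    rw [h1, map_bot] at h2
    exact h2
  · intro hab
    exact (OrderHomClass.mono l hab) hl

theorem map_sSup_iff {B : Type*} [CompleteAtomicBooleanAlgebra B] (l : CompleteLatticeHom B Prop)
    (s : Set B) : l (sSup s) ↔ ∃ a ∈ s, l a := by
  rw [map_sSup, sSup_Prop_eq]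
  simp only [Set.mem_image, exists_prop, eq_iff_iff]
  exact ⟨fun ⟨_, ⟨b, hb, h⟩, hp⟩ => ⟨b, hb, h.mpr hp⟩, fun ⟨b, hb, h⟩ => ⟨_, ⟨b, hb, Iff.rfl⟩, h⟩⟩

/-- The map `α_B : B → Set (caΣ_B)`, `α_B(b) := {λ | λ(b)}`, is a bijection from
a complete atomic Boolean algebra `B` onto the full power set of the set of
completely additive two-valued homomorphisms of `B`. -/
theorem alpha_bijective {B : Type*} [CompleteAtomicBooleanAlgebra B] :
    Function.Bijective (fun b : B => {l : CompleteLatticeHom B Prop | l b}) := by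
  constructor
  · intro b c h
    rw [← sSup_atoms_le_eq b, ← sSup_atoms_le_eq c]
    congr 1
    ext a
    refine and_congr_right fun ha => ?_
    exact Set.ext_iff.mp h (atomHom a ha)
  · intro S
    refine ⟨sSup {a | ∃ ha : IsAtom a, atomHom a ha ∈ S}, ?_⟩
    ext l
    change l _ ↔ l ∈ S
    rw [map_sSup_iff]
    constructor
    · rintro ⟨a, ⟨ha, hS⟩, hl⟩
      rwa [eq_atomHom l a ha hl]
    · intro hS
      have ht : l (sSup {a : B | IsAtom a}) := by
        rw [sSup_atoms_eq_top, map_top]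
        trivial
      obtain ⟨a, ha, hl⟩ := (map_sSup_iff l _).mp ht
      have ha' : IsAtom a := ha
      exact ⟨a, ⟨ha', eq_atomHom l a ha' hl ▸ hS⟩, hl⟩
end

section
/- Let L be a complete lattice and let B', B be subsets of L with B' ⊆ B, such that both B and B' are closed under sInf and sSup of arbitrary subsets, and such that B is atomistic: every b ∈ B satisfies b = sSup {a | a is an atom of B and a ≤ b}, where an atom of B is an element a ∈ B with a ≠ ⊥ such that every y ∈ B with y < a equals ⊥. Then for every x ∈ L, δ_{B'}(x) = sSup {δ_{B'}(a) | a is an atom of B and a ≤ δ_B(x)}. -/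
/-- The daseinisation of `x` to a subset `B` of a complete lattice:
`δ_B(x) := sInf {y ∈ B | x ≤ y}`. -/
def das {L : Type*} [CompleteLattice L] (B : Set L) (x : L) : L :=
  sInf {y ∈ B | x ≤ y}

/-- `a` is an atom of the subset `C`: `a ∈ C`, `a ≠ ⊥`, and every element of `C`
strictly below `a` is `⊥`. -/
def IsAtomOf {L : Type*} [CompleteLattice L] (C : Set L) (a : L) : Prop :=
  a ∈ C ∧ a ≠ ⊥ ∧ ∀ y ∈ C, y < a → y = ⊥

/-- If `B' ⊆ B` are closed under arbitrary `sInf` and `sSup` and `B` is atomistic,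
then `δ_{B'}(x)` is the supremum of `δ_{B'}(a)` over the atoms `a` of `B` below `δ_B(x)`. -/
theorem das_eq_sSup_das_atoms {L : Type*} [CompleteLattice L] (B' B : Set L) (hsub : B' ⊆ B)
    (hInfB : ∀ S ⊆ B, sInf S ∈ B) (hSupB : ∀ S ⊆ B, sSup S ∈ B)
    (hInfB' : ∀ S ⊆ B', sInf S ∈ B') (hSupB' : ∀ S ⊆ B', sSup S ∈ B')
    (hatomistic : ∀ b ∈ B, b = sSup {a | IsAtomOf B a ∧ a ≤ b})
    (x : L) :
    das B' x = sSup {z | ∃ a, IsAtomOf B a ∧ a ≤ das B x ∧ z = das B' a} := by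
  apply le_antisymm
  · apply sInf_le
    refine ⟨hSupB' _ ?_, ?_⟩
    · rintro z ⟨a, -, -, rfl⟩
      exact hInfB' _ (fun y hy => hy.1)
    · have hx : x ≤ das B x := le_sInf (fun y hy => hy.2)
      have hB : das B x ∈ B := hInfB _ (fun y hy => hy.1)
      refine hx.trans ((hatomistic _ hB).le.trans ?_)
      apply sSup_le
      rintro a ⟨ha, hax⟩
      have h1 : a ≤ das B' a := le_sInf (fun y hy => hy.2)
      exact h1.trans (le_sSup ⟨a, ha, hax, rfl⟩)
  · apply sSup_le
    rintro z ⟨a, ha, hax, rfl⟩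
    apply le_sInf
    rintro y ⟨hy, hxy⟩
    have h1 : das B x ≤ y := sInf_le ⟨hsub hy, hxy⟩
    exact sInf_le ⟨hy, hax.trans h1⟩
end

section
/- Let L be a complete orthomodular lattice, let B ⊆ L be closed under sInf of arbitrary subsets, and let B' ⊆ B be closed under sInf of arbitrary subsets and under the orthocomplementation x ↦ xᗮ. Assume the distributive laws p ⊓ (q ⊔ r) = (p ⊓ q) ⊔ (p ⊓ r) and p ⊔ (q ⊓ r) = (p ⊔ q) ⊓ (p ⊔ r) hold for all p, q, r ∈ B. If a is an atom of B (i.e., a ∈ B, a ≠ ⊥, and every y ∈ B with y < a equals ⊥), then δ_{B'}(a) is an atom of B' (i.e., δ_{B'}(a) ≠ ⊥ and every y ∈ B' with y < δ_{B'}(a) equals ⊥). -/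
/-- In a complete orthomodular lattice, if `B' ⊆ B` are closed under `sInf`,
`B'` is closed under orthocomplementation, the distributive laws hold on `B`,
and `a` is an atom of `B`, then `δ_{B'}(a)` is an atom of `B'`. -/
theorem das_atom_isAtom {L : Type*} [CompleteLattice L] (oc : L → L)
    (h_inf : ∀ x : L, x ⊓ oc x = ⊥) (h_sup : ∀ x : L, x ⊔ oc x = ⊤)
    (h_anti : ∀ x y : L, x ≤ y → oc y ≤ oc x) (h_inv : ∀ x : L, oc (oc x) = x)
    (h_om : ∀ x y : L, x ≤ y → y = x ⊔ (y ⊓ oc x))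
    (B B' : Set L) (hsub : B' ⊆ B)
    (hInfB : ∀ S ⊆ B, sInf S ∈ B)
    (hInfB' : ∀ S ⊆ B', sInf S ∈ B')
    (hocB' : ∀ b ∈ B', oc b ∈ B')
    (hdist1 : ∀ p ∈ B, ∀ q ∈ B, ∀ r ∈ B, p ⊓ (q ⊔ r) = (p ⊓ q) ⊔ (p ⊓ r))
    (hdist2 : ∀ p ∈ B, ∀ q ∈ B, ∀ r ∈ B, p ⊔ (q ⊓ r) = (p ⊔ q) ⊓ (p ⊔ r))
    (a : L) (haB : a ∈ B) (haBot : a ≠ ⊥) (hatom : ∀ y ∈ B, y < a → y = ⊥) :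
    das B' a ≠ ⊥ ∧ ∀ y ∈ B', y < das B' a → y = ⊥ := by
  have hle : a ≤ das B' a := le_sInf fun y hy => hy.2
  have hmin : ∀ y ∈ B', a ≤ y → das B' a ≤ y := fun y hy h => sInf_le ⟨hy, h⟩
  refine ⟨fun h => haBot (le_bot_iff.mp (h ▸ hle)), fun y hy hlt => ?_⟩
  have hmem : a ⊓ y ∈ B := by
    rw [← sInf_pair]
    apply hInfB
    rintro z (rfl | rfl)
    · exact haB
    · exact hsub hy
  have hne : ¬ a ≤ y := fun h => absurd (hmin y hy h) (not_le_of_gt hlt)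
  have hbot : a ⊓ y = ⊥ := hatom _ hmem (inf_lt_left.mpr hne)
  have hd := hdist1 a haB y (hsub hy) (oc y) (hsub (hocB' y hy))
  rw [h_sup, inf_top_eq, hbot, bot_sup_eq] at hd
  have hay : a ≤ oc y := inf_eq_left.mp hd.symm
  have hyy : y ≤ oc y := hlt.le.trans (hmin _ (hocB' y hy) hay)
  rw [← h_inf y]
  exact (inf_eq_left.mpr hyy).symm
end

section
/- Let L be a complete orthomodular lattice and let B', B be subsets of L with B' ⊆ B, each closed under sInf and sSup of arbitrary subsets and under the orthocomplementation x ↦ xᗮ, each atomistic (every b in the subset is the sSup of the atoms of that subset lying below b, where an atom of a subset C is an element a ∈ C with a ≠ ⊥ such that every y ∈ C with y < a equals ⊥), and such that p ⊓ (q ⊔ r) = (p ⊓ q) ⊔ (p ⊓ r) and p ⊔ (q ⊓ r) = (p ⊔ q) ⊓ (p ⊔ r) for all p, q, r ∈ B. Then for every x ∈ L and every atom a' of B' with a' ≤ δ_{B'}(x), there exists an atom a of B with a ≤ δ_B(x) and δ_{B'}(a) = a'. -/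
/-- In a complete orthomodular lattice, with `B' ⊆ B` complete atomistic Boolean
sublattices, every atom `a'` of `B'` below `δ_{B'}(x)` arises as `δ_{B'}(a)` for
some atom `a` of `B` below `δ_B(x)`. -/
theorem atom_below_das_lift {L : Type*} [CompleteLattice L] (oc : L → L)
    (h_inf : ∀ x : L, x ⊓ oc x = ⊥) (h_sup : ∀ x : L, x ⊔ oc x = ⊤)
    (h_anti : ∀ x y : L, x ≤ y → oc y ≤ oc x) (h_inv : ∀ x : L, oc (oc x) = x)
    (h_om : ∀ x y : L, x ≤ y → y = x ⊔ (y ⊓ oc x))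
    (B' B : Set L) (hsub : B' ⊆ B)
    (hInfB : ∀ S ⊆ B, sInf S ∈ B) (hSupB : ∀ S ⊆ B, sSup S ∈ B)
    (hInfB' : ∀ S ⊆ B', sInf S ∈ B') (hSupB' : ∀ S ⊆ B', sSup S ∈ B')
    (hocB : ∀ b ∈ B, oc b ∈ B) (hocB' : ∀ b ∈ B', oc b ∈ B')
    (hatomisticB : ∀ b ∈ B, b = sSup {a | IsAtomOf B a ∧ a ≤ b})
    (hatomisticB' : ∀ b ∈ B', b = sSup {a | IsAtomOf B' a ∧ a ≤ b})
    (hdist1 : ∀ p ∈ B, ∀ q ∈ B, ∀ r ∈ B, p ⊓ (q ⊔ r) = (p ⊓ q) ⊔ (p ⊓ r))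
    (hdist2 : ∀ p ∈ B, ∀ q ∈ B, ∀ r ∈ B, p ⊔ (q ⊓ r) = (p ⊔ q) ⊓ (p ⊔ r)) :
    ∀ x : L, ∀ a' : L, IsAtomOf B' a' → a' ≤ das B' x →
      ∃ a : L, IsAtomOf B a ∧ a ≤ das B x ∧ das B' a = a' := by
  intro x a' ha' hle
  obtain ⟨haB', hane, hmin⟩ := ha'
  have hdB : das B x ∈ B := hInfB _ (fun y hy => hy.1)
  have hxd : x ≤ das B x := le_sInf (fun y hy => hy.2)
  have hmB : das B x ⊓ a' ∈ B := by
    rw [← sInf_pair]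
    apply hInfB
    rintro y (rfl | rfl)
    · exact hdB
    · exact hsub haB'
  have hmne : das B x ⊓ a' ≠ ⊥ := by
    intro hm
    have h1 := hdist1 _ hdB _ (hsub haB') _ (hsub (hocB' _ haB'))
    rw [h_sup, hm, inf_top_eq, bot_sup_eq] at h1
    have h2 : das B x ≤ oc a' := by
      rw [h1]
      exact inf_le_right
    have h3 : das B' x ≤ oc a' := sInf_le ⟨hocB' _ haB', hxd.trans h2⟩
    apply hane
    rw [eq_bot_iff, ← h_inf a']
    exact le_inf le_rfl (hle.trans h3)
  have hex : ∃ a, IsAtomOf B a ∧ a ≤ das B x ⊓ a' := by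
    by_contra hno
    apply hmne
    rw [hatomisticB _ hmB, sSup_eq_bot]
    intro a ha
    exact absurd ⟨a, ha⟩ hno
  obtain ⟨a, ha, ham⟩ := hex
  refine ⟨a, ha, ham.trans inf_le_left, ?_⟩
  have h4 : das B' a ≤ a' := sInf_le ⟨haB', ham.trans inf_le_right⟩
  have h5 : a ≤ das B' a := le_sInf (fun y hy => hy.2)
  by_contra hne
  have h6 := hmin _ (hInfB' _ (fun y hy => hy.1)) (lt_of_le_of_ne h4 hne)
  apply ha.2.1
  rw [eq_bot_iff]
  exact h5.trans h6.le
end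

section
/- Let L be a complete orthomodular lattice containing an element z with ⊥ < z < ⊤. Then for every x ∈ L, the infimum (in L) of the set {δ_B(x) | B is a nontrivial complete atomic Boolean subalgebra of L} equals x. Consequently, daseinisation is injective: if δ_B(x) = δ_B(y) for every nontrivial complete atomic Boolean subalgebra B of L, then x = y. -/
/-- `B` is a nontrivial complete atomic Boolean subalgebra of `L` (with respect to
the orthocomplementation `oc`). -/
def IsCABS {L : Type*} [CompleteLattice L] (oc : L → L) (B : Set L) : Prop :=
  (∀ S ⊆ B, sInf S ∈ B) ∧ (∀ S ⊆ B, sSup S ∈ B) ∧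
  (∀ b ∈ B, oc b ∈ B) ∧
  (∀ p ∈ B, ∀ q ∈ B, ∀ r ∈ B,
    p ⊓ (q ⊔ r) = (p ⊓ q) ⊔ (p ⊓ r) ∧ p ⊔ (q ⊓ r) = (p ⊔ q) ⊓ (p ⊔ r)) ∧
  (∀ b ∈ B, b = sSup {a | IsAtomOf B a ∧ a ≤ b}) ∧
  (∃ b ∈ B, b ≠ ⊥ ∧ b ≠ ⊤)

/-- The four-element Boolean subalgebra generated by a nontrivial element. -/
theorem isCABS_four {L : Type*} [CompleteLattice L] (oc : L → L)
    (h_inf : ∀ x : L, x ⊓ oc x = ⊥) (h_sup : ∀ x : L, x ⊔ oc x = ⊤)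
    (h_inv : ∀ x : L, oc (oc x) = x)
    (a : L) (ha1 : a ≠ ⊥) (ha2 : a ≠ ⊤) :
    IsCABS oc ({⊥, a, oc a, ⊤} : Set L) := by
  have i1 := h_inf a
  have s1 := h_sup a
  have i2 : oc a ⊓ a = ⊥ := by rw [inf_comm, i1]
  have s2 : oc a ⊔ a = ⊤ := by rw [sup_comm, s1]
  have ob : oc ⊥ = ⊤ := by simpa using h_sup ⊥
  have ot : oc ⊤ = ⊥ := by simpa using h_inf ⊤
  have hoa : oc a ≠ ⊥ := by
    intro h
    rw [h] at s1
    exact ha2 (by simpa using s1)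
  have fin : ({⊥, a, oc a, ⊤} : Set L).Finite := by simp
  have atA : IsAtomOf ({⊥, a, oc a, ⊤} : Set L) a := by
    refine ⟨by simp, ha1, ?_⟩
    rintro y (rfl | rfl | rfl | rfl) hy
    · rfl
    · exact absurd hy (lt_irrefl _)
    · rwa [inf_eq_right.2 hy.le] at i1
    · exact absurd hy not_top_lt
  have atO : IsAtomOf ({⊥, a, oc a, ⊤} : Set L) (oc a) := by
    refine ⟨by simp, hoa, ?_⟩
    rintro y (rfl | rfl | rfl | rfl) hy
    · rfl
    · rwa [inf_eq_left.2 hy.le] at i1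
    · exact absurd hy (lt_irrefl _)
    · exact absurd hy not_top_lt
  refine ⟨?_, ?_, ?_, ?_, ?_, a, by simp, ha1, ha2⟩
  · intro S hS
    induction S, fin.subset hS using Set.Finite.induction_on with
    | empty => simp
    | @insert b T _ _ ih =>
      have h1 := ih ((Set.subset_insert _ _).trans hS)
      have h2 := hS (Set.mem_insert b T)
      rw [sInf_insert]
      generalize sInf T = t at h1
      rcases h1 with rfl | rfl | rfl | rfl <;> rcases h2 with rfl | rfl | rfl | rfl <;>
        simp [i1, i2]
  · intro S hS
    induction S, fin.subset hS using Set.Finite.induction_on with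
    | empty => simp
    | @insert b T _ _ ih =>
      have h1 := ih ((Set.subset_insert _ _).trans hS)
      have h2 := hS (Set.mem_insert b T)
      rw [sSup_insert]
      generalize sSup T = t at h1
      rcases h1 with rfl | rfl | rfl | rfl <;> rcases h2 with rfl | rfl | rfl | rfl <;>
        simp [s1, s2]
  · rintro b (rfl | rfl | rfl | rfl) <;> simp [ob, ot, h_inv]
  · rintro p (rfl | rfl | rfl | rfl) q (rfl | rfl | rfl | rfl) r (rfl | rfl | rfl | rfl) <;>
      simp [i1, i2, s1, s2]
  · intro b hb
    apply le_antisymm _ (sSup_le fun c hc => hc.2)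
    rcases hb with rfl | rfl | rfl | rfl
    · exact bot_le
    · exact le_sSup ⟨atA, le_rfl⟩
    · exact le_sSup ⟨atO, le_rfl⟩
    · refine s1.ge.trans ?_
      exact sup_le (le_sSup ⟨atA, le_top⟩) (le_sSup ⟨atO, le_top⟩)

/-- In a complete orthomodular lattice with a nontrivial element, the infimum of
the daseinisations of `x` over all nontrivial complete atomic Boolean subalgebras
equals `x`; consequently daseinisation is injective. -/
theorem sInf_das_eq_self_and_das_injective {L : Type*} [CompleteLattice L] (oc : L → L)
    (h_inf : ∀ x : L, x ⊓ oc x = ⊥) (h_sup : ∀ x : L, x ⊔ oc x = ⊤)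
    (h_anti : ∀ x y : L, x ≤ y → oc y ≤ oc x) (h_inv : ∀ x : L, oc (oc x) = x)
    (h_om : ∀ x y : L, x ≤ y → y = x ⊔ (y ⊓ oc x))
    (z : L) (hz1 : ⊥ < z) (hz2 : z < ⊤) :
    (∀ x : L, sInf {w | ∃ B : Set L, IsCABS oc B ∧ w = das B x} = x) ∧
    (∀ x y : L, (∀ B : Set L, IsCABS oc B → das B x = das B y) → x = y) := by
  have key : ∀ x : L, ∃ B : Set L, IsCABS oc B ∧ x ∈ B := by
    intro x
    by_cases hx : x = ⊥ ∨ x = ⊤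
    · refine ⟨_, isCABS_four oc h_inf h_sup h_inv z hz1.ne' hz2.ne, ?_⟩
      rcases hx with rfl | rfl <;> simp
    · rw [not_or] at hx
      exact ⟨_, isCABS_four oc h_inf h_sup h_inv x hx.1 hx.2, by simp⟩
  have le_das : ∀ (B : Set L) (x : L), x ≤ das B x := fun B x => le_sInf fun y hy => hy.2
  have main : ∀ x : L, sInf {w | ∃ B : Set L, IsCABS oc B ∧ w = das B x} = x := by
    intro x
    apply le_antisymm
    · obtain ⟨B, hB, hx⟩ := key x
      have h1 : das B x ≤ x := sInf_le ⟨hx, le_rfl⟩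
      exact le_trans (sInf_le ⟨B, hB, rfl⟩) h1
    · apply le_sInf
      rintro w ⟨B, -, rfl⟩
      exact le_das B x
  refine ⟨main, fun x y h => ?_⟩
  rw [← main x, ← main y]
  congr 1
  ext w
  constructor
  · rintro ⟨B, hB, rfl⟩
    exact ⟨B, hB, h B hB⟩
  · rintro ⟨B, hB, rfl⟩
    exact ⟨B, hB, (h B hB).symm⟩
end

section
/- Let L be a complete orthomodular lattice and let z ∈ L satisfy ⊥ < z < ⊤. Then the following are equivalent: (a) for every nontrivial complete atomic Boolean subalgebra B of L and all x, y ∈ L, δ_B(x ⊓ y) = δ_B(x) ⊓ δ_B(y); (b) every element of L equals ⊥, z, zᗮ, or ⊤. -/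
theorem four_isCABS {L : Type*} [CompleteLattice L] (oc : L → L)
    (h_inf : ∀ x : L, x ⊓ oc x = ⊥) (h_sup : ∀ x : L, x ⊔ oc x = ⊤)
    (h_inv : ∀ x : L, oc (oc x) = x)
    (z : L) (hz1 : ⊥ < z) (hz2 : z < ⊤) :
    IsCABS oc {w : L | w = ⊥ ∨ w = z ∨ w = oc z ∨ w = ⊤} := by
  have hi := h_inf z
  have hs := h_sup z
  have hi' : oc z ⊓ z = ⊥ := by rw [inf_comm, hi]
  have hs' : oc z ⊔ z = ⊤ := by rw [sup_comm, hs]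
  have hb : oc ⊥ = ⊤ := by simpa using h_sup ⊥
  have ht : oc ⊤ = ⊥ := by simpa using h_inf ⊤
  have hoz : oc z ≠ ⊥ := fun h => by
    rw [h, sup_bot_eq] at hs
    exact hz2.ne hs
  have a1 : IsAtomOf {w : L | w = ⊥ ∨ w = z ∨ w = oc z ∨ w = ⊤} z := by
    refine ⟨Or.inr (Or.inl rfl), hz1.ne', ?_⟩
    rintro y (rfl | rfl | rfl | rfl) hy
    · rfl
    · exact absurd hy (lt_irrefl _)
    · rw [← hi', inf_eq_left.2 hy.le]
    · exact absurd hy not_top_lt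
  have a2 : IsAtomOf {w : L | w = ⊥ ∨ w = z ∨ w = oc z ∨ w = ⊤} (oc z) := by
    refine ⟨Or.inr (Or.inr (Or.inl rfl)), hoz, ?_⟩
    rintro y (rfl | rfl | rfl | rfl) hy
    · rfl
    · rw [← hi, inf_eq_left.2 hy.le]
    · exact absurd hy (lt_irrefl _)
    · exact absurd hy not_top_lt
  refine ⟨?_, ?_, ?_, ?_, ?_, z, Or.inr (Or.inl rfl), hz1.ne', hz2.ne⟩
  · intro S hS
    by_cases h0 : ⊥ ∈ S
    · exact Or.inl (le_bot_iff.1 (sInf_le h0))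
    by_cases h1 : z ∈ S
    · by_cases h2 : oc z ∈ S
      · exact Or.inl (le_bot_iff.1 (hi ▸ le_inf (sInf_le h1) (sInf_le h2)))
      · refine Or.inr (Or.inl (le_antisymm (sInf_le h1) (le_sInf fun b hb => ?_)))
        rcases hS hb with rfl | rfl | rfl | rfl
        · exact absurd hb h0
        · exact le_rfl
        · exact absurd hb h2
        · exact le_top
    · by_cases h2 : oc z ∈ S
      · refine Or.inr (Or.inr (Or.inl (le_antisymm (sInf_le h2) (le_sInf fun b hb => ?_))))
        rcases hS hb with rfl | rfl | rfl | rfl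
        · exact absurd hb h0
        · exact absurd hb h1
        · exact le_rfl
        · exact le_top
      · refine Or.inr (Or.inr (Or.inr (sInf_eq_top.2 fun b hb => ?_)))
        rcases hS hb with rfl | rfl | rfl | rfl
        · exact absurd hb h0
        · exact absurd hb h1
        · exact absurd hb h2
        · rfl
  · intro S hS
    by_cases h0 : ⊤ ∈ S
    · exact Or.inr (Or.inr (Or.inr (top_le_iff.1 (le_sSup h0))))
    by_cases h1 : z ∈ S
    · by_cases h2 : oc z ∈ S
      · exact Or.inr (Or.inr (Or.inr (top_le_iff.1 (hs ▸ sup_le (le_sSup h1) (le_sSup h2)))))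
      · refine Or.inr (Or.inl (le_antisymm (sSup_le fun b hb => ?_) (le_sSup h1)))
        rcases hS hb with rfl | rfl | rfl | rfl
        · exact bot_le
        · exact le_rfl
        · exact absurd hb h2
        · exact absurd hb h0
    · by_cases h2 : oc z ∈ S
      · refine Or.inr (Or.inr (Or.inl (le_antisymm (sSup_le fun b hb => ?_) (le_sSup h2))))
        rcases hS hb with rfl | rfl | rfl | rfl
        · exact bot_le
        · exact absurd hb h1
        · exact le_rfl
        · exact absurd hb h0
      · refine Or.inl (sSup_eq_bot.2 fun b hb => ?_)
        rcases hS hb with rfl | rfl | rfl | rfl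
        · rfl
        · exact absurd hb h1
        · exact absurd hb h2
        · exact absurd hb h0
  · rintro b (h | h | h | h) <;> rw [h] <;> simp [hb, ht, h_inv]
  · rintro p (hp | hp | hp | hp) q (hq | hq | hq | hq) r (hr | hr | hr | hr) <;>
      rw [hp, hq, hr] <;> simp [hi, hs, hi', hs']
  · intro b hbB
    refine le_antisymm ?_ (sSup_le fun a ha => ha.2)
    rcases hbB with h | h | h | h
    · rw [h]; exact bot_le
    · rw [h]; exact le_sSup ⟨a1, le_rfl⟩
    · rw [h]; exact le_sSup ⟨a2, le_rfl⟩
    · rw [h]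
      exact hs.ge.trans (sup_le (le_sSup ⟨a1, le_top⟩) (le_sSup ⟨a2, le_top⟩))

/-- Daseinisation preserves meets for every nontrivial complete atomic Boolean
subalgebra iff `L = {⊥, z, zᗮ, ⊤}`. -/
theorem das_preserves_inf_iff {L : Type*} [CompleteLattice L] (oc : L → L)
    (h_inf : ∀ x : L, x ⊓ oc x = ⊥) (h_sup : ∀ x : L, x ⊔ oc x = ⊤)
    (h_anti : ∀ x y : L, x ≤ y → oc y ≤ oc x) (h_inv : ∀ x : L, oc (oc x) = x)
    (h_om : ∀ x y : L, x ≤ y → y = x ⊔ (y ⊓ oc x))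
    (z : L) (hz1 : ⊥ < z) (hz2 : z < ⊤) :
    (∀ B : Set L, IsCABS oc B → ∀ x y : L, das B (x ⊓ y) = das B x ⊓ das B y) ↔
    (∀ w : L, w = ⊥ ∨ w = z ∨ w = oc z ∨ w = ⊤) := by
  have ht : oc ⊤ = ⊥ := by simpa using h_inf ⊤
  have hb : oc ⊥ = ⊤ := by simpa using h_sup ⊥
  have le_das : ∀ (B : Set L) (x : L), x ≤ das B x := fun B x => le_sInf fun y hy => hy.2
  constructor
  · intro H w
    have hB := four_isCABS oc h_inf h_sup h_inv z hz1 hz2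
    have H' := H _ hB
    have key : ∀ w : L, w ≤ z ∨ w ≤ oc z ∨ w = ⊤ := by
      intro w
      by_contra! hc
      obtain ⟨c1, c2, c3⟩ := hc
      have e := H' w (oc w)
      have e1 : das {w : L | w = ⊥ ∨ w = z ∨ w = oc z ∨ w = ⊤} w = ⊤ := by
        refine sInf_eq_top.2 ?_
        rintro y ⟨h | h | h | h, hy⟩ <;> rw [h] at hy
        · exact absurd (hy.trans bot_le) c1
        · exact absurd hy c1
        · exact absurd hy c2
        · exact h
      have e0 : das {w : L | w = ⊥ ∨ w = z ∨ w = oc z ∨ w = ⊤} ⊥ = ⊥ :=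
        le_bot_iff.1 (sInf_le ⟨Or.inl rfl, le_rfl⟩)
      rw [h_inf, e1, e0, top_inf_eq] at e
      have h2 : oc w = ⊥ := le_bot_iff.1 (e ▸ le_das _ _)
      apply c3
      rw [← h_inv w, h2, hb]
    have k0 : ∀ u : L, w ≤ u → oc w ≤ u → u = ⊤ := fun u h1 h2 =>
      top_le_iff.1 (h_sup w ▸ sup_le h1 h2)
    have hoz : oc z ≠ ⊤ := fun h => by
      have := h_inf z
      rw [h, inf_top_eq] at this
      exact hz1.ne' this
    rcases key w with h1 | h1 | h1
    · rcases key (oc w) with h2 | h2 | h2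
      · exact absurd (k0 _ h1 h2) hz2.ne
      · have := h_anti _ _ h2
        rw [h_inv, h_inv] at this
        exact Or.inr (Or.inl (le_antisymm h1 this))
      · left
        rw [← h_inv w, h2, ht]
    · rcases key (oc w) with h2 | h2 | h2
      · have := h_anti _ _ h2
        rw [h_inv] at this
        exact Or.inr (Or.inr (Or.inl (le_antisymm h1 this)))
      · exact absurd (k0 _ h1 h2) hoz
      · left
        rw [← h_inv w, h2, ht]
    · exact Or.inr (Or.inr (Or.inr h1))
  · intro H B hB x y
    obtain ⟨hI, hS, hO, -, -, b, hbB, hb1, hb2⟩ := hB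
    have hall : ∀ w : L, w ∈ B := by
      have hbot : ⊥ ∈ B := by simpa using hS ∅ (Set.empty_subset _)
      have htop : ⊤ ∈ B := by simpa using hI ∅ (Set.empty_subset _)
      have hz : z ∈ B := by
        rcases H b with h | h | h | h
        · exact absurd h hb1
        · exact h ▸ hbB
        · have := hO b hbB
          rwa [h, h_inv] at this
        · exact absurd h hb2
      intro w
      rcases H w with h | h | h | h <;> rw [h]
      · exact hbot
      · exact hz
      · exact hO z hz
      · exact htop
    have hd : ∀ w : L, das B w = w := fun w =>
      le_antisymm (sInf_le ⟨hall w, le_rfl⟩) (le_das B w)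
    rw [hd, hd, hd]
end

section
/- Let L be a complete orthomodular lattice and let z ∈ L satisfy ⊥ < z < ⊤. Then the following are equivalent: (a) for every nontrivial complete atomic Boolean subalgebra B of L and every x ∈ L, δ_B(xᗮ) = (δ_B(x))ᗮ; (b) every element of L equals ⊥, z, zᗮ, or ⊤. -/
/-- Daseinisation preserves orthocomplements for every nontrivial complete atomic
Boolean subalgebra iff `L = {⊥, z, zᗮ, ⊤}`. -/
theorem das_preserves_compl_iff {L : Type*} [CompleteLattice L] (oc : L → L)
    (h_inf : ∀ x : L, x ⊓ oc x = ⊥) (h_sup : ∀ x : L, x ⊔ oc x = ⊤)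
    (h_anti : ∀ x y : L, x ≤ y → oc y ≤ oc x) (h_inv : ∀ x : L, oc (oc x) = x)
    (h_om : ∀ x y : L, x ≤ y → y = x ⊔ (y ⊓ oc x))
    (z : L) (hz1 : ⊥ < z) (hz2 : z < ⊤) :
    (∀ B : Set L, IsCABS oc B → ∀ x : L, das B (oc x) = oc (das B x)) ↔
    (∀ w : L, w = ⊥ ∨ w = z ∨ w = oc z ∨ w = ⊤) := by
  have hb : oc (⊥ : L) = ⊤ := by simpa using h_sup ⊥
  have ht : oc (⊤ : L) = ⊥ := by simpa using h_inf ⊤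
  have hi := h_inf z
  have hs := h_sup z
  have hi' : oc z ⊓ z = ⊥ := by rw [inf_comm]; exact hi
  have hs' : oc z ⊔ z = ⊤ := by rw [sup_comm]; exact hs
  have hc : oc z ≠ ⊥ := by
    intro h
    rw [h, sup_bot_eq] at hs
    exact hz2.ne hs
  constructor
  · intro H w
    let B : Set L := {w | w = ⊥ ∨ w = z ∨ w = oc z ∨ w = ⊤}
    have mb : ⊥ ∈ B := Or.inl rfl
    have mz : z ∈ B := Or.inr (Or.inl rfl)
    have mc : oc z ∈ B := Or.inr (Or.inr (Or.inl rfl))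
    have mt : ⊤ ∈ B := Or.inr (Or.inr (Or.inr rfl))
    have hInf : ∀ S ⊆ B, sInf S ∈ B := by
      intro S hS
      by_cases h0 : ⊥ ∈ S
      · exact Or.inl (le_bot_iff.1 (sInf_le h0))
      by_cases h1 : z ∈ S
      · by_cases h2 : oc z ∈ S
        · exact Or.inl (le_bot_iff.1 (hi ▸ le_inf (sInf_le h1) (sInf_le h2)))
        · refine Or.inr (Or.inl (le_antisymm (sInf_le h1) (le_sInf ?_)))
          intro y hy
          rcases hS hy with rfl | rfl | rfl | rfl
          · exact absurd hy h0
          · exact le_rfl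
          · exact absurd hy h2
          · exact le_top
      · by_cases h2 : oc z ∈ S
        · refine Or.inr (Or.inr (Or.inl (le_antisymm (sInf_le h2) (le_sInf ?_))))
          intro y hy
          rcases hS hy with rfl | rfl | rfl | rfl
          · exact absurd hy h0
          · exact absurd hy h1
          · exact le_rfl
          · exact le_top
        · refine Or.inr (Or.inr (Or.inr (top_le_iff.1 (le_sInf ?_))))
          intro y hy
          rcases hS hy with rfl | rfl | rfl | rfl
          · exact absurd hy h0
          · exact absurd hy h1
          · exact absurd hy h2
          · exact le_top
    have hSup : ∀ S ⊆ B, sSup S ∈ B := by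
      intro S hS
      by_cases h0 : ⊤ ∈ S
      · exact Or.inr (Or.inr (Or.inr (top_le_iff.1 (le_sSup h0))))
      by_cases h1 : z ∈ S
      · by_cases h2 : oc z ∈ S
        · exact Or.inr (Or.inr (Or.inr
            (top_le_iff.1 (hs ▸ sup_le (le_sSup h1) (le_sSup h2)))))
        · refine Or.inr (Or.inl (le_antisymm (sSup_le ?_) (le_sSup h1)))
          intro y hy
          rcases hS hy with rfl | rfl | rfl | rfl
          · exact bot_le
          · exact le_rfl
          · exact absurd hy h2
          · exact absurd hy h0
      · by_cases h2 : oc z ∈ S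
        · refine Or.inr (Or.inr (Or.inl (le_antisymm (sSup_le ?_) (le_sSup h2))))
          intro y hy
          rcases hS hy with rfl | rfl | rfl | rfl
          · exact bot_le
          · exact absurd hy h1
          · exact le_rfl
          · exact absurd hy h0
        · refine Or.inl (le_bot_iff.1 (sSup_le ?_))
          intro y hy
          rcases hS hy with rfl | rfl | rfl | rfl
          · exact bot_le
          · exact absurd hy h1
          · exact absurd hy h2
          · exact absurd hy h0
    have az : IsAtomOf B z := by
      refine ⟨mz, hz1.ne', ?_⟩
      rintro y (h | h | h | h) hlt
      · exact h
      · exact absurd h hlt.ne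
      · rw [← h, inf_eq_right.2 hlt.le] at hi
        exact hi
      · exact absurd (h ▸ hlt) not_top_lt
    have ac : IsAtomOf B (oc z) := by
      refine ⟨mc, hc, ?_⟩
      rintro y (h | h | h | h) hlt
      · exact h
      · rw [← h, inf_eq_left.2 (h ▸ hlt.le)] at hi
        exact hi
      · exact absurd h hlt.ne
      · exact absurd (h ▸ hlt) not_top_lt
    have hB : IsCABS oc B := by
      refine ⟨hInf, hSup, ?_, ?_, ?_, z, mz, hz1.ne', hz2.ne⟩
      · rintro b (h | h | h | h)
        · rw [h, hb]; exact mt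
        · rw [h]; exact mc
        · rw [h, h_inv]; exact mz
        · rw [h, ht]; exact mb
      · rintro p (hp | hp | hp | hp) q (hq | hq | hq | hq) r (hr | hr | hr | hr) <;>
          simp [hp, hq, hr, hi, hs, hi', hs']
      · intro b hbB
        refine le_antisymm ?_ (sSup_le fun a ha => ha.2)
        rcases hbB with h | h | h | h
        · rw [h]; exact bot_le
        · exact h.le.trans (le_sSup ⟨az, h.ge⟩)
        · exact h.le.trans (le_sSup ⟨ac, h.ge⟩)
        · rw [h]
          exact hs.ge.trans (sup_le (le_sSup ⟨az, le_top⟩) (le_sSup ⟨ac, le_top⟩))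
    have hd : das B w ∈ B := hInf _ fun y hy => hy.1
    have hle : ∀ x, x ≤ das B x := fun x => le_sInf fun y hy => hy.2
    have h1 : oc w ≤ oc (das B w) := H B hB w ▸ hle (oc w)
    have h2 : das B w ≤ w := by
      have := h_anti _ _ h1
      rwa [h_inv, h_inv] at this
    have h3 : das B w = w := le_antisymm h2 (hle w)
    rw [h3] at hd
    exact hd
  · rintro H B ⟨hInf, hSup, hC, -, -, b, hbB, hb0, hb1⟩ x
    have mb : (⊥ : L) ∈ B := by simpa using hSup ∅ (Set.empty_subset _)
    have mt : (⊤ : L) ∈ B := by simpa using hInf ∅ (Set.empty_subset _)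
    have mz : z ∈ B ∧ oc z ∈ B := by
      rcases H b with h | h | h | h
      · exact absurd h hb0
      · exact h ▸ ⟨hbB, hC _ hbB⟩
      · have := hC _ hbB
        rw [h, h_inv] at this
        exact ⟨this, h ▸ hbB⟩
      · exact absurd h hb1
    have hall : ∀ w, w ∈ B := by
      intro w
      rcases H w with h | h | h | h
      · exact h ▸ mb
      · exact h ▸ mz.1
      · exact h ▸ mz.2
      · exact h ▸ mt
    have hdas : ∀ w, das B w = w := fun w =>
      le_antisymm (sInf_le ⟨hall w, le_rfl⟩) (le_sInf fun y hy => hy.2)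
    rw [hdas, hdas]
end

section
/- Let L be a complete orthomodular lattice and let u, v ∈ L satisfy ⊥ < u, u ⊔ v < ⊤, and v ≰ u. Set v' := uᗮ ⊓ (u ⊔ v) and B := {⊥, u ⊔ v, (u ⊔ v)ᗮ, ⊤}. Then u ⊔ v' = u ⊔ v, u ⊓ v' = ⊥, δ_B(u) = u ⊔ v, δ_B(v') = u ⊔ v, and δ_B(u ⊓ v') = ⊥; in particular δ_B(u) ⊓ δ_B(v') ≠ δ_B(u ⊓ v'). -/
/-- In a complete orthomodular lattice, for `⊥ < u`, `u ⊔ v < ⊤`, `v ≰ u`, setting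
`v' := uᗮ ⊓ (u ⊔ v)` and `B := {⊥, u ⊔ v, (u ⊔ v)ᗮ, ⊤}`, daseinisation to `B`
fails to preserve the meet of `u` and `v'`. -/
theorem das_not_preserve_inf_example {L : Type*} [CompleteLattice L] (oc : L → L)
    (h_inf : ∀ x : L, x ⊓ oc x = ⊥) (h_sup : ∀ x : L, x ⊔ oc x = ⊤)
    (h_anti : ∀ x y : L, x ≤ y → oc y ≤ oc x) (h_inv : ∀ x : L, oc (oc x) = x)
    (h_om : ∀ x y : L, x ≤ y → y = x ⊔ (y ⊓ oc x))
    (u v : L) (hu : ⊥ < u) (huv : u ⊔ v < ⊤) (hvu : ¬ v ≤ u) :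
    u ⊔ (oc u ⊓ (u ⊔ v)) = u ⊔ v ∧
    u ⊓ (oc u ⊓ (u ⊔ v)) = ⊥ ∧
    das {⊥, u ⊔ v, oc (u ⊔ v), ⊤} u = u ⊔ v ∧
    das {⊥, u ⊔ v, oc (u ⊔ v), ⊤} (oc u ⊓ (u ⊔ v)) = u ⊔ v ∧
    das {⊥, u ⊔ v, oc (u ⊔ v), ⊤} (u ⊓ (oc u ⊓ (u ⊔ v))) = ⊥ ∧
    das {⊥, u ⊔ v, oc (u ⊔ v), ⊤} u ⊓ das {⊥, u ⊔ v, oc (u ⊔ v), ⊤} (oc u ⊓ (u ⊔ v)) ≠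
      das {⊥, u ⊔ v, oc (u ⊔ v), ⊤} (u ⊓ (oc u ⊓ (u ⊔ v))) := by
  have key : ∀ x w : L, x ≠ ⊥ → x ≤ w → das {⊥, w, oc w, ⊤} x = w := by
    intro x w hx hxw
    apply le_antisymm
    · exact sInf_le ⟨by simp, hxw⟩
    · apply le_sInf
      rintro y ⟨hy, hxy⟩
      simp only [Set.mem_insert_iff, Set.mem_singleton_iff] at hy
      rcases hy with rfl | rfl | rfl | rfl
      · exact absurd (le_bot_iff.mp hxy) hx
      · exact le_rfl
      · exact absurd (le_bot_iff.mp ((le_inf hxw hxy).trans (h_inf w).le)) hx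
      · exact le_top
  have h1 : u ⊔ (oc u ⊓ (u ⊔ v)) = u ⊔ v := by
    rw [inf_comm]
    exact (h_om u (u ⊔ v) le_sup_left).symm
  have h2 : u ⊓ (oc u ⊓ (u ⊔ v)) = ⊥ := by
    rw [← inf_assoc, h_inf, bot_inf_eq]
  have hv' : oc u ⊓ (u ⊔ v) ≠ ⊥ := by
    intro h
    rw [h, sup_bot_eq] at h1
    exact hvu (le_sup_right.trans h1.ge)
  have h3 := key u (u ⊔ v) hu.ne' le_sup_left
  have h4 := key (oc u ⊓ (u ⊔ v)) (u ⊔ v) hv' inf_le_right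
  have h5 : das {⊥, u ⊔ v, oc (u ⊔ v), ⊤} (u ⊓ (oc u ⊓ (u ⊔ v))) = ⊥ := by
    rw [h2]
    exact le_bot_iff.mp (sInf_le ⟨by simp, le_rfl⟩)
  refine ⟨h1, h2, h3, h4, h5, ?_⟩
  rw [h3, h4, h5, inf_idem]
  exact (hu.trans_le le_sup_left).ne'
end

section
/- Let L be a complete lattice with an orthocomplementation x ↦ xᗮ (satisfying x ⊓ xᗮ = ⊥, x ⊔ xᗮ = ⊤, antitonicity, and involutivity), and let y, z ∈ L satisfy y ≠ ⊥, y ≠ ⊤, and y ⊓ z = y ⊓ zᗮ = yᗮ ⊓ z = yᗮ ⊓ zᗮ = ⊥. Set B_z := {⊥, z, zᗮ, ⊤}. Then δ_{B_z}(y) = ⊤, δ_{B_z}(yᗮ) = ⊤, and δ_{B_z}(y ⊓ yᗮ) = ⊥; in particular δ_{B_z}(y) ⊓ δ_{B_z}(yᗮ) ≠ δ_{B_z}(y ⊓ yᗮ). -/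
/-- If `y` is noncommuting with `z` in the strong sense that all four meets of
`y, yᗮ` with `z, zᗮ` vanish, then daseinisation to `B_z := {⊥, z, zᗮ, ⊤}` sends
both `y` and `yᗮ` to `⊤` but `y ⊓ yᗮ` to `⊥`. -/
theorem das_noncommuting_example {L : Type*} [CompleteLattice L] (oc : L → L)
    (h_inf : ∀ x : L, x ⊓ oc x = ⊥) (h_sup : ∀ x : L, x ⊔ oc x = ⊤)
    (h_anti : ∀ x y : L, x ≤ y → oc y ≤ oc x) (h_inv : ∀ x : L, oc (oc x) = x)
    (y z : L) (hy_bot : y ≠ ⊥) (hy_top : y ≠ ⊤)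
    (h1 : y ⊓ z = ⊥) (h2 : y ⊓ oc z = ⊥) (h3 : oc y ⊓ z = ⊥) (h4 : oc y ⊓ oc z = ⊥) :
    das {⊥, z, oc z, ⊤} y = ⊤ ∧
    das {⊥, z, oc z, ⊤} (oc y) = ⊤ ∧
    das {⊥, z, oc z, ⊤} (y ⊓ oc y) = ⊥ ∧
    das {⊥, z, oc z, ⊤} y ⊓ das {⊥, z, oc z, ⊤} (oc y) ≠ das {⊥, z, oc z, ⊤} (y ⊓ oc y) := by
  have key : ∀ x : L, x ≠ ⊥ → x ⊓ z = ⊥ → x ⊓ oc z = ⊥ → das {⊥, z, oc z, ⊤} x = ⊤ := by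
    intro x hx hz hoz
    unfold das
    rw [sInf_eq_top]
    rintro w ⟨hw, hxw⟩
    rcases hw with rfl | rfl | rfl | rfl
    · exact absurd (le_bot_iff.mp hxw) hx
    · exact absurd ((inf_eq_left.mpr hxw).symm.trans hz) hx
    · exact absurd ((inf_eq_left.mpr hxw).symm.trans hoz) hx
    · rfl
  have hoy : oc y ≠ ⊥ := by
    intro h
    apply hy_top
    have := h_sup y
    rwa [h, sup_bot_eq] at this
  have e1 := key y hy_bot h1 h2
  have e2 := key (oc y) hoy h3 h4
  have e3 : das {⊥, z, oc z, ⊤} (y ⊓ oc y) = ⊥ := by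
    unfold das
    rw [h_inf]
    exact le_bot_iff.mp (sInf_le ⟨Or.inl rfl, le_rfl⟩)
  refine ⟨e1, e2, e3, ?_⟩
  rw [e1, e2, e3, inf_top_eq]
  intro h
  exact hy_bot (le_bot_iff.mp (h ▸ le_top))
end
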